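/- arXiv:1302.6330 — 2 statements merged into one kernel-verified Lean document; each statement's English description precedes it below -/
import Mathlib

section
/- For every contract 𝒞, the set C = { e ∈ E : e is reachable } of all reachable events is a configuration of 𝒞, and it is the greatest configuration: every configuration C' of 𝒞 satisfies C' ⊆ C. -/
/-- A contract: events `E`, participants `A`, ownership map `pi`, a saturated
fulfillment relation `ok`, a saturated enabling relation `en` (`⊢`) and a
saturated circular enabling relation `cen` (`⊩`). -/
structure Contract (E A : Type) [Fintype E] [Fintype A] where
  pi : E → A
  ok : A → Set E → Prop
  ok_sat : ∀ (a : A) (X Y : Set E), ok a X → X ⊆ Y → ok a Y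
  en : Set E → E → Prop
  en_sat : ∀ (X Y : Set E) (e : E), en X e → X ⊆ Y → en Y e
  cen : Set E → E → Prop
  cen_sat : ∀ (X Y : Set E) (e : E), cen X e → X ⊆ Y → cen Y e

variable {E A : Type} [Fintype E] [Fintype A]

/-- `C` is a configuration iff there is a sequence `e₀,…,eₙ` whose elements are
exactly those of `C`, where each `eᵢ` is either `⊢`-enabled by its predecessors
or `⊩`-enabled by `C` itself. -/
def IsConfig (𝒞 : Contract E A) (C : Set E) : Prop :=
  ∃ l : List E, (∀ e, e ∈ l ↔ e ∈ C) ∧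
    ∀ i : Fin l.length, 𝒞.en {e | e ∈ l.take i.1} (l.get i) ∨ 𝒞.cen C (l.get i)

/-- An event is reachable iff it belongs to some configuration. -/
def Reachable (𝒞 : Contract E A) (e : E) : Prop :=
  ∃ C, IsConfig 𝒞 C ∧ e ∈ C

/-!
Configurations are closed under unions: concatenating a sequence for `C` with one for `D` gives one
for `C ∪ D`, because saturation lets every step survive the enlargement of its set of predecessors
and of the ambient set. As `E` is finite, the union of all configurations, which is the set of
reachable events, is a finite union.
-/

/-- `IsTrace 𝒞 C l` says that every entry of `l` is either `⊢`-enabled by the entries before it or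
`⊩`-enabled by `C`. Separating `C` from the set of entries of `l` allows the two to grow
independently; a configuration is the case where they agree. -/
def IsTrace (𝒞 : Contract E A) (C : Set E) (l : List E) : Prop :=
  ∀ i : Fin l.length, 𝒞.en {e | e ∈ l.take i.1} (l.get i) ∨ 𝒞.cen C (l.get i)

variable {𝒞 : Contract E A} {C D : Set E} {l m : List E}

theorem IsTrace.mono (hl : IsTrace 𝒞 C l) (hCD : C ⊆ D) : IsTrace 𝒞 D l :=
  fun i => (hl i).imp_right fun hcen => 𝒞.cen_sat _ _ _ hcen hCD

theorem IsTrace.append (hl : IsTrace 𝒞 C l) (hm : IsTrace 𝒞 C m) : IsTrace 𝒞 C (l ++ m) := by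
  rintro ⟨i, hi⟩
  simp only [List.get_eq_getElem]
  rcases lt_or_ge i l.length with hil | hil
  · rw [List.getElem_append_left hil, List.take_append_of_le_length hil.le]
    exact hl ⟨i, hil⟩
  · obtain ⟨j, rfl⟩ := Nat.exists_eq_add_of_le hil
    have hj : j < m.length := by simpa using hi
    have htake : {e | e ∈ m.take j} ⊆ {e | e ∈ (l ++ m).take (l.length + j)} := by
      rw [List.take_length_add_append]
      exact fun e he => List.mem_append_right l he
    simp only [List.getElem_append_right hil, Nat.add_sub_cancel_left]
    exact (hm ⟨j, hj⟩).imp_left fun hen => 𝒞.en_sat _ _ _ hen htake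

theorem isConfig_empty (𝒞 : Contract E A) : IsConfig 𝒞 ∅ :=
  ⟨[], by simp, fun i => i.elim0⟩

theorem IsConfig.union (hC : IsConfig 𝒞 C) (hD : IsConfig 𝒞 D) : IsConfig 𝒞 (C ∪ D) := by
  obtain ⟨l, hlC, hl⟩ := hC
  obtain ⟨m, hmD, hm⟩ := hD
  have hl' : IsTrace 𝒞 (C ∪ D) l := IsTrace.mono hl Set.subset_union_left
  have hm' : IsTrace 𝒞 (C ∪ D) m := IsTrace.mono hm Set.subset_union_right
  exact ⟨l ++ m, by simp [hlC, hmD], hl'.append hm'⟩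

theorem supClosed_setOf_isConfig (𝒞 : Contract E A) : SupClosed {C | IsConfig 𝒞 C} :=
  fun _ hC _ hD => IsConfig.union hC hD

theorem isConfig_sUnion {S : Set (Set E)} (hS : ∀ C ∈ S, IsConfig 𝒞 C) : IsConfig 𝒞 (⋃₀ S) :=
  (supClosed_setOf_isConfig 𝒞).sSup_mem S.toFinite (isConfig_empty 𝒞) hS

theorem setOf_reachable_eq_sUnion (𝒞 : Contract E A) :
    {e | Reachable 𝒞 e} = ⋃₀ {C | IsConfig 𝒞 C} :=
  rfl

/-- The set of all reachable events is a configuration, and it is the greatest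
one. -/
theorem reachable_set_greatest_config (𝒞 : Contract E A) :
    IsConfig 𝒞 {e | Reachable 𝒞 e} ∧
      ∀ C', IsConfig 𝒞 C' → C' ⊆ {e | Reachable 𝒞 e} := by
  rw [setOf_reachable_eq_sUnion]
  exact ⟨isConfig_sUnion fun _ hC => hC, fun _ hC => Set.subset_sUnion_of_mem hC⟩
end

section
/- A contract 𝒞 admits an agreement if and only if for every participant A ∈ 𝒜 there exists a set G ⊆ E such that ok(A,G) and, for every e ∈ G, [𝒞] ⊢_PCL π(e) says e. -/
variable {E A : Type} [Fintype E] [Fintype A]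

/-- An agreement: a configuration in which every participant is satisfied. -/
def Agreement (𝒞 : Contract E A) (C : Set E) : Prop :=
  IsConfig 𝒞 C ∧ ∀ a : A, 𝒞.ok a C

/-- Formulae of PCL: intuitionistic logic plus contractual implication `cimp`
(`↠`) and the indexed modality `says`. Atoms are events in `E`. -/
inductive PCLFormula (E A : Type) where
  | top : PCLFormula E A
  | bot : PCLFormula E A
  | atom : E → PCLFormula E A
  | and : PCLFormula E A → PCLFormula E A → PCLFormula E A
  | or : PCLFormula E A → PCLFormula E A → PCLFormula E A
  | imp : PCLFormula E A → PCLFormula E A → PCLFormula E A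
  | cimp : PCLFormula E A → PCLFormula E A → PCLFormula E A
  | says : A → PCLFormula E A → PCLFormula E A

/-- Hilbert-style provability for PCL: an intuitionistic base (axioms plus
modus ponens) extended with the axioms for `↠` and `says`. `PCLProof Γ φ`
formalises `Γ ⊢_PCL φ`. -/
inductive PCLProof {E A : Type} (Γ : Set (PCLFormula E A)) : PCLFormula E A → Prop
  | hyp {φ} : φ ∈ Γ → PCLProof Γ φ
  | mp {φ ψ} : PCLProof Γ (.imp φ ψ) → PCLProof Γ φ → PCLProof Γ ψ
  | axK {φ ψ} : PCLProof Γ (.imp φ (.imp ψ φ))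
  | axS {φ ψ χ} :
      PCLProof Γ (.imp (.imp φ (.imp ψ χ)) (.imp (.imp φ ψ) (.imp φ χ)))
  | axTop : PCLProof Γ .top
  | axBot {φ} : PCLProof Γ (.imp .bot φ)
  | axAndI {φ ψ} : PCLProof Γ (.imp φ (.imp ψ (.and φ ψ)))
  | axAndE1 {φ ψ} : PCLProof Γ (.imp (.and φ ψ) φ)
  | axAndE2 {φ ψ} : PCLProof Γ (.imp (.and φ ψ) ψ)
  | axOrI1 {φ ψ} : PCLProof Γ (.imp φ (.or φ ψ))
  | axOrI2 {φ ψ} : PCLProof Γ (.imp ψ (.or φ ψ))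
  | axOrE {φ ψ χ} :
      PCLProof Γ (.imp (.imp φ χ) (.imp (.imp ψ χ) (.imp (.or φ ψ) χ)))
  | axCTop : PCLProof Γ (.cimp .top .top)
  | axCFix {φ} : PCLProof Γ (.imp (.cimp φ φ) φ)
  | axCPrePost {φ φ' ψ ψ'} :
      PCLProof Γ (.imp (.imp φ' φ)
        (.imp (.cimp φ ψ) (.imp (.imp ψ ψ') (.cimp φ' ψ'))))
  | axSaysI {a φ} : PCLProof Γ (.imp φ (.says a φ))
  | axSaysIdem {a φ} : PCLProof Γ (.imp (.says a (.says a φ)) (.says a φ))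
  | axSaysMono {a φ ψ} :
      PCLProof Γ (.imp (.imp φ ψ) (.imp (.says a φ) (.says a ψ)))

/-- The conjunction `⋀_{d ∈ D} (pi d) says d`. -/
noncomputable def conjSays (𝒞 : Contract E A) (D : Set E) : PCLFormula E A :=
  ((Set.toFinite D).toFinset.toList.map
    (fun d => PCLFormula.says (𝒞.pi d) (.atom d))).foldr PCLFormula.and .top

/-- The PCL encoding `[𝒞]` of a contract, as the set of the encodings
`π(a) says ((⋀_{d∈D} π(d) says d) [∘] a)` of all its enablings. -/
noncomputable def encodeContract (𝒞 : Contract E A) : Set (PCLFormula E A) :=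
  {f | ∃ D e, 𝒞.en D e ∧
        f = .says (𝒞.pi e) (.imp (conjSays 𝒞 D) (.atom e))} ∪
  {f | ∃ D e, 𝒞.cen D e ∧
        f = .says (𝒞.pi e) (.cimp (conjSays 𝒞 D) (.atom e))}

/-! For a set `X` of events, let `f X` be the set of events generated by `⊢` from those `⊩`-enabled
by `X`. A configuration `C` satisfies `C ⊆ f C`, and every fixed point of `f` is a configuration.

If `C ⊆ f C`, the clauses for `C ⊩ e` form a multi-party handshake, which the axiom `(φ ↠ φ) → φ`
resolves; the other events of `C` then follow by ordinary implication.

Conversely, PCL is sound in every Heyting algebra when `φ ↠ ψ` is read as `(ψ ⇨ φ) ⇨ ψ` and `says`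
is erased. In the algebra of lower sets of `ℕ`, let the value of `e` be `{n | e ∈ fⁿ E}`. Every
clause of the encoding is then valid; for `D ⊩ e` this is an induction on `n`, since `D ⊆ fⁿ E`
implies `e ∈ fⁿ⁺¹ E`. Hence the events that PCL derives lie in every `fⁿ E`, and this descending
sequence reaches a fixed point, which is an agreement as soon as the derived events satisfy
everyone. -/

theorem exists_isFixedPt_iterate_of_map_le {α : Type*} [PartialOrder α] [WellFoundedLT α]
    {f : α → α} (hf : Monotone f) {x : α} (hx : f x ≤ x) :
    ∃ n, Function.IsFixedPt f (f^[n] x) := by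
  obtain ⟨_, ⟨n, rfl⟩, hmin⟩ := WellFounded.has_min (wellFounded_lt (α := α))
    (Set.range fun n => f^[n] x) (Set.range_nonempty _)
  have map_le : f (f^[n] x) ≤ f^[n] x := by
    simpa only [Function.iterate_succ_apply'] using hf.antitone_iterate_of_map_le hx n.le_succ
  exact ⟨n, map_le.eq_of_not_lt (hmin _ ⟨n + 1, Function.iterate_succ_apply' f n x⟩)⟩

namespace PCLProof

variable {α ι : Type} {Γ Δ : Set (PCLFormula α ι)} {φ ψ : PCLFormula α ι} {a : ι}

theorem hyp_mp_induction {P : PCLFormula α ι → Prop} (h : PCLProof Γ φ) (hyp : ∀ φ ∈ Γ, P φ)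
    (mp : ∀ φ ψ, P (.imp φ ψ) → P φ → P ψ) (thm : ∀ φ, (∀ Θ, PCLProof Θ φ) → P φ) : P φ := by
  induction h with
  | hyp h => exact hyp _ h
  | mp _ _ h₁ h₂ => exact mp _ _ h₁ h₂
  | axK => exact thm _ fun _ => .axK
  | axS => exact thm _ fun _ => .axS
  | axTop => exact thm _ fun _ => .axTop
  | axBot => exact thm _ fun _ => .axBot
  | axAndI => exact thm _ fun _ => .axAndI
  | axAndE1 => exact thm _ fun _ => .axAndE1
  | axAndE2 => exact thm _ fun _ => .axAndE2
  | axOrI1 => exact thm _ fun _ => .axOrI1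
  | axOrI2 => exact thm _ fun _ => .axOrI2
  | axOrE => exact thm _ fun _ => .axOrE
  | axCTop => exact thm _ fun _ => .axCTop
  | axCFix => exact thm _ fun _ => .axCFix
  | axCPrePost => exact thm _ fun _ => .axCPrePost
  | axSaysI => exact thm _ fun _ => .axSaysI
  | axSaysIdem => exact thm _ fun _ => .axSaysIdem
  | axSaysMono => exact thm _ fun _ => .axSaysMono

theorem mono (hΓΔ : Γ ⊆ Δ) (h : PCLProof Γ φ) : PCLProof Δ φ :=
  h.hyp_mp_induction (fun _ hφ => .hyp (hΓΔ hφ)) (fun _ _ => .mp) fun _ hφ => hφ Δ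

theorem imp_self : PCLProof Γ (.imp φ φ) :=
  .mp (.mp (.axS (ψ := .imp φ φ)) .axK) .axK

theorem deduction (h : PCLProof (insert φ Γ) ψ) : PCLProof Γ (.imp φ ψ) := by
  refine h.hyp_mp_induction (P := fun χ => PCLProof Γ (.imp φ χ)) ?_
    (fun _ _ h₁ h₂ => .mp (.mp .axS h₁) h₂) fun _ hχ => .mp .axK (hχ Γ)
  rintro χ (rfl | hχ)
  · exact imp_self
  · exact .mp .axK (.hyp hχ)

theorem cut (h : PCLProof (insert φ Γ) ψ) (hφ : PCLProof Γ φ) : PCLProof Γ ψ :=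
  h.deduction.mp hφ

theorem says_map (h : PCLProof (insert φ Γ) ψ) (hφ : PCLProof Γ (.says a φ)) :
    PCLProof Γ (.says a ψ) :=
  .mp (.mp .axSaysMono h.deduction) hφ

theorem says_of_says_cimp (h : PCLProof (insert (.says a ψ) Γ) φ)
    (hφψ : PCLProof Γ (.says a (.cimp φ ψ))) : PCLProof Γ (.says a ψ) := by
  refine .mp .axSaysIdem (says_map ?_ hφψ)
  -- Pre- and postfixing turn `φ ↠ ψ` into `(a says ψ) ↠ (a says ψ)`.
  have says_imp : PCLProof (insert (.cimp φ ψ) Γ) (.imp (.says a ψ) φ) :=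
    h.deduction.mono (Set.subset_insert _ _)
  exact .mp .axCFix (.mp (.mp (.mp .axCPrePost says_imp) (.hyp (Set.mem_insert _ _))) .axSaysI)

theorem of_forall_says_cimp {κ : Type*} {s : Set κ} (hs : s.Finite) (a : κ → ι)
    (ψ : κ → PCLFormula α ι)
    (hφψ : ∀ i ∈ s, PCLProof Γ (.says (a i) (.cimp φ (ψ i))))
    (h : PCLProof (Γ ∪ (fun i => .says (a i) (ψ i)) '' s) φ) : PCLProof Γ φ := by
  induction s, hs using Set.Finite.induction_on generalizing Γ with
  | empty => simpa using h
  | @insert i s _ _ ih =>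
    rw [Set.image_insert_eq, Set.union_insert, ← Set.insert_union] at h
    have of_says : PCLProof (insert (.says (a i) (ψ i)) Γ) φ :=
      ih (fun j hj => (hφψ j (Set.mem_insert_of_mem i hj)).mono (Set.subset_insert _ _)) h
    exact of_says.cut (of_says.says_of_says_cimp (hφψ i (Set.mem_insert i s)))

theorem foldr_and_iff {l : List (PCLFormula α ι)} :
    PCLProof Γ (l.foldr .and .top) ↔ ∀ φ ∈ l, PCLProof Γ φ := by
  induction l with
  | nil => simp [axTop]
  | cons φ l ih =>
    rw [List.foldr_cons, List.forall_mem_cons, ← ih]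
    exact ⟨fun h => ⟨.mp .axAndE1 h, .mp .axAndE2 h⟩, fun h => .mp (.mp .axAndI h.1) h.2⟩

theorem conjSays_iff {𝒞 : Contract E A} {Γ : Set (PCLFormula E A)} {D : Set E} :
    PCLProof Γ (conjSays 𝒞 D) ↔ ∀ d ∈ D, PCLProof Γ (.says (𝒞.pi d) (.atom d)) := by
  simp [conjSays, foldr_and_iff]

end PCLProof

/-- The value of a formula in a Heyting algebra. Principals are ignored, and `φ ↠ ψ` is read as
`(ψ ⇨ φ) ⇨ ψ`: the precondition `φ` may be established with the help of `ψ` itself. -/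
def PCLFormula.eval {α ι : Type} {H : Type*} [HeytingAlgebra H] (v : α → H) : PCLFormula α ι → H
  | .top => ⊤
  | .bot => ⊥
  | .atom e => v e
  | .and φ ψ => φ.eval v ⊓ ψ.eval v
  | .or φ ψ => φ.eval v ⊔ ψ.eval v
  | .imp φ ψ => φ.eval v ⇨ ψ.eval v
  | .cimp φ ψ => (ψ.eval v ⇨ φ.eval v) ⇨ ψ.eval v
  | .says _ φ => φ.eval v

section Semantics

variable {α ι : Type} {H : Type*} [HeytingAlgebra H] {v : α → H}

theorem cimp_pre_post_le (a a' b b' : H) :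
    a' ⇨ a ≤ ((b ⇨ a) ⇨ b) ⇨ (b ⇨ b') ⇨ (b' ⇨ a') ⇨ b' := by
  simp only [le_himp_iff]
  set x := (a' ⇨ a) ⊓ ((b ⇨ a) ⇨ b) ⊓ (b ⇨ b') ⊓ (b' ⇨ a')
  have le_pre : x ≤ a' ⇨ a := inf_le_left.trans (inf_le_left.trans inf_le_left)
  have le_cimp : x ≤ (b ⇨ a) ⇨ b := inf_le_left.trans (inf_le_left.trans inf_le_right)
  have le_post : x ≤ b ⇨ b' := inf_le_left.trans inf_le_right
  have le_b'_imp_a' : x ≤ b' ⇨ a' := inf_le_right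
  have le_b_imp_a' : x ≤ b ⇨ a' := (le_inf le_post le_b'_imp_a').trans (himp_triangle ..)
  have le_b_imp_a : x ≤ b ⇨ a := (le_inf le_b_imp_a' le_pre).trans (himp_triangle ..)
  have le_b : x ≤ b := (le_inf le_cimp le_b_imp_a).trans himp_inf_le
  exact (le_inf le_post le_b).trans himp_inf_le

theorem PCLProof.eval_eq_top {Γ : Set (PCLFormula α ι)} {φ : PCLFormula α ι}
    (h : PCLProof Γ φ) (hΓ : ∀ ψ ∈ Γ, ψ.eval v = ⊤) : φ.eval v = ⊤ := by
  induction h with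
  | hyp hφ => exact hΓ _ hφ
  | mp _ _ hφψ hφ => simpa only [PCLFormula.eval, hφ, top_himp] using hφψ
  | axTop => rfl
  | axS => simp [PCLFormula.eval, himp_himp, inf_comm]
  | axAndI => simp [PCLFormula.eval, le_himp_iff]
  | axOrE => simp [PCLFormula.eval, sup_himp_distrib, le_himp_iff]
  | axCPrePost => exact himp_eq_top_iff.2 (cimp_pre_post_le ..)
  | _ => simp [PCLFormula.eval]

theorem le_eval_foldr_and {l : List (PCLFormula α ι)} {x : H} :
    x ≤ (l.foldr PCLFormula.and .top).eval v ↔ ∀ φ ∈ l, x ≤ φ.eval v := by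
  induction l with
  | nil => simp [PCLFormula.eval]
  | cons φ l ih => rw [List.foldr_cons, List.forall_mem_cons, ← ih]; exact le_inf_iff

theorem le_eval_conjSays {𝒞 : Contract E A} {v : E → H} {D : Set E} {x : H} :
    x ≤ (conjSays 𝒞 D).eval v ↔ ∀ d ∈ D, x ≤ v d := by
  simp [conjSays, le_eval_foldr_and, PCLFormula.eval]

end Semantics

namespace Contract

/-- `𝒞.Justified X e` means that `e` can be performed if the circular assumptions contained in `X`
are taken for granted: the `X`-justified events are generated by `⊢` from those with `X ⊩ e`. -/
inductive Justified (𝒞 : Contract E A) (X : Set E) : E → Prop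
  | cen {e} : 𝒞.cen X e → Justified 𝒞 X e
  | en {D e} : 𝒞.en D e → (∀ d ∈ D, Justified 𝒞 X d) → Justified 𝒞 X e

/-- The set of `X`-justified events, as an operator on sets of events. -/
def justifiedSet (𝒞 : Contract E A) (X : Set E) : Set E :=
  {e | 𝒞.Justified X e}

variable {𝒞 : Contract E A} {X : Set E} {l : List E} {e : E}

theorem monotone_justifiedSet (𝒞 : Contract E A) : Monotone 𝒞.justifiedSet := by
  intro X Y hXY e he
  induction he with
  | cen h => exact .cen (𝒞.cen_sat X Y _ h hXY)
  | en h _ ih => exact .en h ih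

/-- `𝒞.IsTrace X l` is the order condition of `IsConfig`, with an arbitrary set `X` of events in the
role of the configuration. -/
def IsTrace (𝒞 : Contract E A) (X : Set E) (l : List E) : Prop :=
  ∀ i : Fin l.length, 𝒞.en {e | e ∈ l.take i.1} (l.get i) ∨ 𝒞.cen X (l.get i)

theorem IsTrace.concat (hl : 𝒞.IsTrace X l) (he : 𝒞.en {d | d ∈ l} e ∨ 𝒞.cen X e) :
    𝒞.IsTrace X (l ++ [e]) := by
  rintro ⟨i, hi⟩
  rcases Nat.lt_succ_iff_lt_or_eq.1 (by simpa using hi) with hi | rfl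
  · simpa [List.take_append_of_le_length hi.le, List.getElem_append_left hi] using hl ⟨i, hi⟩
  · simpa using he

theorem IsTrace.justified (hl : 𝒞.IsTrace X l) (he : e ∈ l) : 𝒞.Justified X e := by
  obtain ⟨i, hi, rfl⟩ := List.mem_iff_getElem.1 he
  induction i using Nat.strong_induction_on with
  | _ i ih =>
    refine (hl ⟨i, hi⟩).elim (fun h => .en h fun d hd => ?_) .cen
    obtain ⟨j, hj, rfl⟩ := List.mem_take_iff_getElem.1 hd
    exact ih j (lt_min_iff.1 hj).1 (lt_min_iff.1 hj).2 (List.getElem_mem _)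

theorem exists_isTrace_mem_iff_justified (𝒞 : Contract E A) (X : Set E) :
    ∃ l, 𝒞.IsTrace X l ∧ ∀ e, e ∈ l ↔ 𝒞.Justified X e := by
  obtain ⟨S, ⟨l, hl, rfl⟩, hmax⟩ :=
    (Set.toFinite {S : Set E | ∃ l, 𝒞.IsTrace X l ∧ {e | e ∈ l} = S}).exists_maximal
      ⟨_, [], fun i => i.elim0, rfl⟩
  have mem_of_enabled {e : E} (he : 𝒞.en {d | d ∈ l} e ∨ 𝒞.cen X e) : e ∈ l :=
    hmax ⟨l ++ [e], hl.concat he, rfl⟩ (fun _ => List.mem_append_left _)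
      (List.mem_append_right l (List.mem_singleton_self e))
  refine ⟨l, hl, fun e => ⟨hl.justified, fun he => ?_⟩⟩
  induction he with
  | cen h => exact mem_of_enabled (.inr h)
  | en h _ ih => exact mem_of_enabled (.inl (𝒞.en_sat _ _ _ h ih))

theorem isConfig_of_isFixedPt (hX : Function.IsFixedPt 𝒞.justifiedSet X) : IsConfig 𝒞 X := by
  obtain ⟨l, hl, hmem⟩ := 𝒞.exists_isTrace_mem_iff_justified X
  exact ⟨l, fun e => (hmem e).trans (Set.ext_iff.1 hX e), hl⟩

end Contract

theorem IsConfig.subset_justifiedSet {𝒞 : Contract E A} {C : Set E} (hC : IsConfig 𝒞 C) :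
    C ⊆ 𝒞.justifiedSet C := by
  obtain ⟨l, hmem, hl⟩ := hC
  exact fun e he => Contract.IsTrace.justified hl ((hmem e).2 he)

theorem Contract.Justified.pclProof {𝒞 : Contract E A} {X : Set E} {Γ : Set (PCLFormula E A)}
    {e : E} (he : 𝒞.Justified X e) (hΓ : encodeContract 𝒞 ⊆ Γ)
    (hX : ∀ e, 𝒞.cen X e → PCLProof Γ (.says (𝒞.pi e) (.atom e))) :
    PCLProof Γ (.says (𝒞.pi e) (.atom e)) := by
  induction he with
  | cen h => exact hX _ h
  | en h _ ih =>
    refine .says_map (.mp (.hyp (Set.mem_insert _ _)) ?_) (.hyp (hΓ (.inl ⟨_, _, h, rfl⟩)))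
    exact (PCLProof.conjSays_iff.2 ih).mono (Set.subset_insert _ _)

theorem PCLProof.conjSays_of_subset_justifiedSet {𝒞 : Contract E A} {C : Set E}
    (hC : C ⊆ 𝒞.justifiedSet C) : PCLProof (encodeContract 𝒞) (conjSays 𝒞 C) := by
  refine of_forall_says_cimp (Set.toFinite {e | 𝒞.cen C e}) 𝒞.pi .atom
    (fun e he => .hyp (.inr ⟨C, e, he, rfl⟩)) (conjSays_iff.2 fun e he => ?_)
  exact (hC he).pclProof Set.subset_union_left fun d hd => .hyp (.inr ⟨d, hd, rfl⟩)

namespace Contract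

variable {𝒞 : Contract E A} {D : Set E} {e : E}

/-- The descending sequence `E ⊇ f E ⊇ f (f E) ⊇ …`, where `f` is `𝒞.justifiedSet`. -/
def approx (𝒞 : Contract E A) (n : ℕ) : Set E :=
  𝒞.justifiedSet^[n] ⊤

theorem antitone_approx (𝒞 : Contract E A) : Antitone 𝒞.approx :=
  𝒞.monotone_justifiedSet.antitone_iterate_of_map_le le_top

theorem approx_succ (𝒞 : Contract E A) (n : ℕ) :
    𝒞.approx (n + 1) = 𝒞.justifiedSet (𝒞.approx n) :=
  Function.iterate_succ_apply' _ _ _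

/-- The truth value of an event: the stages of the sequence `𝒞.approx` at which it is present. -/
def stages (𝒞 : Contract E A) (e : E) : LowerSet ℕ where
  carrier := {n | e ∈ 𝒞.approx n}
  lower' _ _ hmn hn := 𝒞.antitone_approx hmn hn

theorem mem_stages {n : ℕ} : n ∈ 𝒞.stages e ↔ e ∈ 𝒞.approx n :=
  Iff.rfl

theorem mem_eval_conjSays {n : ℕ} :
    n ∈ (conjSays 𝒞 D).eval 𝒞.stages ↔ D ⊆ 𝒞.approx n := by
  rw [← LowerSet.Iic_le, le_eval_conjSays]
  exact forall₂_congr fun _ _ => LowerSet.Iic_le.trans mem_stages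

theorem eval_conjSays_le_stages (h : 𝒞.en D e) :
    (conjSays 𝒞 D).eval 𝒞.stages ≤ 𝒞.stages e := by
  rintro (_ | n) hn
  · trivial
  · rw [SetLike.mem_coe, mem_eval_conjSays, approx_succ] at hn
    rw [SetLike.mem_coe, mem_stages, approx_succ]
    exact Justified.en h hn

theorem stages_himp_eval_conjSays_le_stages (h : 𝒞.cen D e) :
    𝒞.stages e ⇨ (conjSays 𝒞 D).eval 𝒞.stages ≤ 𝒞.stages e := by
  intro n hn
  induction n with
  | zero => trivial
  | succ n ih =>
    have hn' := LowerSet.lower _ n.le_succ hn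
    have hD : D ⊆ 𝒞.approx n := mem_eval_conjSays.1 (himp_inf_le (α := LowerSet ℕ) ⟨hn', ih hn'⟩)
    rw [SetLike.mem_coe, mem_stages, approx_succ]
    exact Justified.cen (𝒞.cen_sat _ _ _ h hD)

theorem eval_stages_eq_top {φ : PCLFormula E A} (hφ : φ ∈ encodeContract 𝒞) :
    φ.eval 𝒞.stages = ⊤ := by
  rcases hφ with ⟨D, e, h, rfl⟩ | ⟨D, e, h, rfl⟩
  · exact himp_eq_top_iff.2 (eval_conjSays_le_stages h)
  · exact himp_eq_top_iff.2 (stages_himp_eval_conjSays_le_stages h)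

theorem mem_approx_of_pclProof (n : ℕ)
    (h : PCLProof (encodeContract 𝒞) (.says (𝒞.pi e) (.atom e))) : e ∈ 𝒞.approx n := by
  have stages_eq_top : 𝒞.stages e = ⊤ := h.eval_eq_top fun _ => eval_stages_eq_top
  rw [← mem_stages, stages_eq_top]
  trivial

end Contract

/-- A contract admits an agreement iff every participant has a goal `G` all of
whose events `e` satisfy `[𝒞] ⊢_PCL π(e) says e`. -/
theorem agreement_iff_pcl (𝒞 : Contract E A) :
    (∃ C, Agreement 𝒞 C) ↔
      ∀ a : A, ∃ G : Set E, 𝒞.ok a G ∧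
        ∀ e ∈ G, PCLProof (encodeContract 𝒞) (.says (𝒞.pi e) (.atom e)) := by
  constructor
  · rintro ⟨C, hC, hok⟩ a
    have hproof : PCLProof (encodeContract 𝒞) (conjSays 𝒞 C) :=
      .conjSays_of_subset_justifiedSet hC.subset_justifiedSet
    exact ⟨C, hok a, PCLProof.conjSays_iff.1 hproof⟩
  · intro h
    obtain ⟨n, hn⟩ : ∃ n, Function.IsFixedPt 𝒞.justifiedSet (𝒞.approx n) :=
      exists_isFixedPt_iterate_of_map_le 𝒞.monotone_justifiedSet le_top
    refine ⟨𝒞.approx n, Contract.isConfig_of_isFixedPt hn, fun a => ?_⟩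
    obtain ⟨G, hG, hproof⟩ := h a
    exact 𝒞.ok_sat a G _ hG fun e he => Contract.mem_approx_of_pclProof n (hproof e he)
end
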